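/- There exists K such that the following holds for all k ≥ K. Let 100·ln k ≤ r ≤ 2+2√(k·ln k) and n = 2k+r. Then the number of intersecting families F ⊆ \binom{[n]}{k} satisfying |[φ(F) ∩ L_{k+r−1}]| > \binom{2k+⌊3r/4⌋}{k+r-1} is at most 2^{\binom{n-1}{k-1} − (1/2)·n·\binom{2k}{k}}. -/

import Mathlib

open Finset

/-- The frequency of the element `x` in the family `F`. -/
def freq (F : Finset (Finset ℕ)) (x : ℕ) : ℕ := (F.filter fun S => x ∈ S).card

/-- The most frequent element of `[n] = Icc 1 n` among the sets of `F`,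
ties broken by taking the largest label. -/
noncomputable def mostFreq (n : ℕ) (F : Finset (Finset ℕ)) : ℕ := by
  classical
  exact
    let S := (Finset.Icc 1 n).filter fun x => ∀ y ∈ Finset.Icc 1 n, freq F y ≤ freq F x
    if h : S.Nonempty then S.max' h else 0

/-- The neighborhood in `H` of a family `A` of (k+r-1)-sets:
its (k-1)-shadow, the family of all (k-1)-subsets of members of `A`. -/
def nbhdH (k : ℕ) (A : Finset (Finset ℕ)) : Finset (Finset ℕ) :=
  A.biUnion fun S => Finset.powersetCard (k - 1) S

/-- The closure `[A]` of a family `A ⊆ L_{k+r-1}` over the ground set `g`: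
all (k+r-1)-subsets `v` of the ground set with `N(v) ⊆ N(A)`. -/
def closureH (g : Finset ℕ) (k r : ℕ) (A : Finset (Finset ℕ)) : Finset (Finset ℕ) :=
  (Finset.powersetCard (k + r - 1) g).filter fun v =>
    Finset.powersetCard (k - 1) v ⊆ nbhdH k A

/-!
An intersecting family `F` extends to a maximal one, and the latter consists of all `k`-sets
meeting every member of a generating family of at most `4 ^ k` sets; there are at most
`2 ^ (n * 4 ^ k)` generating families. It remains to bound the number of `F` with large closure
inside each generated intersecting family `G`. Let `D = 2 * n * 4 ^ k`.

If `G` has at most `C(n-1, k-1) - D` members, then counting all its subfamilies suffices.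
Otherwise let `j` be the most frequent element of `G`. The link of `j` is disjoint from the
neighborhood of the family `A` of complements of the members of `G` avoiding `j`, and as `G` has
almost as many members as a star, the closure of `A` hardly expands. By Lovász's form of the
Kruskal–Katona theorem such a closure is small. Hence if a subfamily `F` of `G` has large closure,
its most frequent element is some `f ≠ j`. Few members of `F` avoid `j`, so few avoid `f` while
containing `j`, and all the others contain both `j` and `f`: this leaves about `2 ^ C(n-2, k-2)`
choices for `F`.
-/

section GeneralizedBinomial

theorem succ_mul_ringChoose_succ {R : Type*} [CommRing R] [BinomialRing R] (x : R) (k : ℕ) :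
    (k + 1) * Ring.choose x (k + 1) = (x - k) * Ring.choose x k := by
  have h := Ring.choose_smul_choose x k.le_succ
  rw [Nat.choose_succ_self_right, nsmul_eq_mul, Nat.succ_eq_add_one,
    Nat.add_sub_cancel_left, Ring.choose_one_right] at h
  rw [mul_comm (x - k), ← h, Nat.cast_succ]

theorem succ_mul_ringChoose_add_one_succ {R : Type*} [CommRing R] [BinomialRing R] (x : R) (k : ℕ) :
    (k + 1) * Ring.choose (x + 1) (k + 1) = (x + 1) * Ring.choose x k := by
  rw [Ring.choose_succ_succ, mul_add, succ_mul_ringChoose_succ]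
  ring

theorem continuous_ringChoose (k : ℕ) : Continuous fun x : ℝ => Ring.choose x k := by
  induction k with
  | zero => simpa only [Ring.choose_zero_right] using continuous_const
  | succ k ih =>
    have hk : (k + 1 : ℝ) ≠ 0 := by positivity
    have h : (fun x : ℝ => Ring.choose x (k + 1)) =
        fun x : ℝ => (x - k) * Ring.choose x k / (k + 1) :=
      funext fun x => by rw [← succ_mul_ringChoose_succ, mul_div_cancel_left₀ _ hk]
    rw [h]
    fun_prop

theorem ringChoose_pos {k : ℕ} {x : ℝ} (hx : (k : ℝ) - 1 < x) : 0 < Ring.choose x k := by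
  induction k with
  | zero => simp only [Ring.choose_zero_right, zero_lt_one]
  | succ k ih =>
    rw [Nat.cast_succ, add_sub_cancel_right] at hx
    have h := mul_pos (sub_pos.2 hx) (ih (by linarith))
    rw [← succ_mul_ringChoose_succ] at h
    exact pos_of_mul_pos_right h (by positivity)

theorem exists_ringChoose_eq {k : ℕ} {x d : ℝ} (hx : k ≤ x) (hd : 1 ≤ d)
    (hdx : d ≤ Ring.choose x k) : ∃ y : ℝ, k ≤ y ∧ y ≤ x ∧ Ring.choose y k = d := by
  have hk : Ring.choose (k : ℝ) k = 1 := by rw [Ring.choose_natCast, Nat.choose_self, Nat.cast_one]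
  obtain ⟨y, ⟨hky, hyx⟩, hy⟩ :=
    intermediate_value_Icc hx (continuous_ringChoose k).continuousOn ⟨hk.trans_le hd, hdx⟩
  exact ⟨y, hky, hyx, hy⟩

end GeneralizedBinomial

open scoped FinsetFamily

section Link

variable {α : Type*} [DecidableEq α] {𝒜 : Finset (Finset α)} {k : ℕ}

theorem card_memberSubfamily (v : α) (𝒜 : Finset (Finset α)) :
    #(𝒜.memberSubfamily v) = #{S ∈ 𝒜 | v ∈ S} := by
  have h₁ := card_memberSubfamily_add_card_nonMemberSubfamily v 𝒜
  have h₂ := card_filter_add_card_filter_not (s := 𝒜) (v ∈ ·)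
  rw [nonMemberSubfamily] at h₁
  omega

theorem sum_card_memberSubfamily {s : Finset α} (h𝒜 : (𝒜 : Set (Finset α)).Sized k)
    (hs : ∀ S ∈ 𝒜, S ⊆ s) : ∑ v ∈ s, #(𝒜.memberSubfamily v) = k * #𝒜 := by
  simp only [card_memberSubfamily]
  calc ∑ v ∈ s, #{S ∈ 𝒜 | v ∈ S}
      = ∑ S ∈ 𝒜, #{v ∈ s | v ∈ S} := sum_card_bipartiteAbove_eq_sum_card_bipartiteBelow _
    _ = ∑ _ ∈ 𝒜, k := sum_congr rfl fun S hS => by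
        rw [filter_mem_eq_inter, inter_eq_right.2 (hs S hS), h𝒜 hS]
    _ = k * #𝒜 := by rw [sum_const, smul_eq_mul, mul_comm]

theorem eq_empty_of_shadow_eq_empty (h𝒜 : (𝒜 : Set (Finset α)).Sized (k + 1)) (h : ∂ 𝒜 = ∅) :
    𝒜 = ∅ := by
  refine eq_empty_of_forall_notMem fun S hS => ?_
  obtain ⟨a, ha⟩ := card_pos.1 (k.succ_pos.trans_eq (h𝒜 hS).symm)
  exact notMem_empty _ (h ▸ erase_mem_shadow hS ha)

theorem sized_memberSubfamily (h𝒜 : (𝒜 : Set (Finset α)).Sized (k + 1)) (v : α) :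
    (𝒜.memberSubfamily v : Set (Finset α)).Sized k := fun S hS => by
  obtain ⟨hS, hv⟩ := mem_memberSubfamily.1 hS
  exact Nat.succ_injective ((card_insert_of_notMem hv).symm.trans (h𝒜 hS))

theorem card_memberSubfamily_add_card_memberSubfamily_shadow_le (v : α)
    (𝒜 : Finset (Finset α)) :
    #(𝒜.memberSubfamily v) + #((∂ 𝒜).memberSubfamily v) ≤ #(∂ 𝒜) := by
  have h : 𝒜.memberSubfamily v ⊆ (∂ 𝒜).nonMemberSubfamily v := fun S hS => by
    obtain ⟨hS, hv⟩ := mem_memberSubfamily.1 hS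
    exact mem_nonMemberSubfamily.2 ⟨mem_shadow_iff_insert_mem.2 ⟨v, hv, hS⟩, hv⟩
  have := card_memberSubfamily_add_card_nonMemberSubfamily v (∂ 𝒜)
  have := card_le_card h
  omega

theorem shadow_memberSubfamily_subset (v : α) (𝒜 : Finset (Finset α)) :
    ∂ (𝒜.memberSubfamily v) ⊆ (∂ 𝒜).memberSubfamily v := fun S hS => by
  obtain ⟨a, ha, hS⟩ := mem_shadow_iff_insert_mem.1 hS
  obtain ⟨hS, hv⟩ := mem_memberSubfamily.1 hS
  rw [mem_insert, not_or] at hv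
  refine mem_memberSubfamily.2 ⟨mem_shadow_iff_insert_mem.2 ⟨a, ?_, ?_⟩, hv.2⟩
  · exact mt (mem_insert.1 · |>.resolve_right ha) (Ne.symm hv.1)
  · rwa [insert_comm]

end Link

section KruskalKatona

variable {α : Type*} [DecidableEq α] {𝒜 : Finset (Finset α)} {k : ℕ} {x : ℝ}

theorem card_memberSubfamily_le_of_le_degree {v : α} (hx : k + 1 ≤ x)
    (h : #(∂ 𝒜) ≤ Ring.choose x (k + 1))
    (hv : Ring.choose (x - 1) k ≤ #((∂ 𝒜).memberSubfamily v)) :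
    (k + 1) * (#(𝒜.memberSubfamily v) : ℝ) ≤ (x - (k + 1)) * #((∂ 𝒜).memberSubfamily v) := by
  have hsum : (#(𝒜.memberSubfamily v) : ℝ) + #((∂ 𝒜).memberSubfamily v) ≤ #(∂ 𝒜) := by
    exact_mod_cast card_memberSubfamily_add_card_memberSubfamily_shadow_le v 𝒜
  have pascal := Ring.choose_succ_succ (x - 1) k
  have ratio := succ_mul_ringChoose_succ (x - 1) k
  rw [sub_add_cancel] at pascal
  have hle : (#(𝒜.memberSubfamily v) : ℝ) ≤ Ring.choose (x - 1) (k + 1) := by linarith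
  calc (k + 1) * (#(𝒜.memberSubfamily v) : ℝ)
      ≤ (k + 1) * Ring.choose (x - 1) (k + 1) := by gcongr
    _ = (x - (k + 1)) * Ring.choose (x - 1) k := by rw [ratio, sub_sub, add_comm 1 (k : ℝ)]
    _ ≤ (x - (k + 1)) * #((∂ 𝒜).memberSubfamily v) := by
      gcongr

theorem card_le_of_card_memberSubfamily_le (h𝒜 : (𝒜 : Set (Finset α)).Sized (k + 1 + 1)) {c : ℝ}
    (h : ∀ v, (k + 1) * (#(𝒜.memberSubfamily v) : ℝ) ≤ c * #((∂ 𝒜).memberSubfamily v)) :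
    (k + 1 + 1) * (#𝒜 : ℝ) ≤ c * #(∂ 𝒜) := by
  have sum_link : ∑ v ∈ 𝒜.sup id, #(𝒜.memberSubfamily v) = (k + 1 + 1) * #𝒜 :=
    sum_card_memberSubfamily h𝒜 fun S => le_sup (f := id)
  have sum_shadow : ∑ v ∈ 𝒜.sup id, #((∂ 𝒜).memberSubfamily v) = (k + 1) * #(∂ 𝒜) :=
    sum_card_memberSubfamily h𝒜.shadow fun S hS =>
      let ⟨_, hT, hST⟩ := exists_subset_of_mem_shadow hS
      hST.trans (le_sup (f := id) hT)
  have hk : (0 : ℝ) < k + 1 := by positivity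
  refine le_of_mul_le_mul_left ?_ hk
  have := sum_le_sum fun v (_ : v ∈ 𝒜.sup id) => h v
  rw [← mul_sum, ← mul_sum, ← Nat.cast_sum, ← Nat.cast_sum, sum_link, sum_shadow] at this
  push_cast at this
  linarith

/- Keevash's proof: the inequality holds for the link of each vertex `v`. Either `v` has large
degree in the shadow, and then few shadow sets avoid `v`, or the induction hypothesis applies to
the link with a smaller parameter `y`. -/
theorem succ_mul_card_le_of_card_shadow_le (hk : k ≠ 0) (h𝒜 : (𝒜 : Set (Finset α)).Sized (k + 1))
    (hx : k ≤ x) (h : #(∂ 𝒜) ≤ Ring.choose x k) : (k + 1) * (#𝒜 : ℝ) ≤ (x - k) * #(∂ 𝒜) := by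
  induction k generalizing 𝒜 x with
  | zero => exact absurd rfl hk
  | succ k ih =>
    rw [Nat.cast_succ] at hx ⊢
    refine card_le_of_card_memberSubfamily_le h𝒜 fun v => ?_
    rcases le_or_gt (Ring.choose (x - 1) k) #((∂ 𝒜).memberSubfamily v) with hd | hd
    · exact card_memberSubfamily_le_of_le_degree hx h hd
    rcases (𝒜.memberSubfamily v).eq_empty_or_nonempty with hv | hv
    · rw [hv, card_empty, Nat.cast_zero, mul_zero]
      exact mul_nonneg (by linarith) (Nat.cast_nonneg _)
    have hlink := sized_memberSubfamily h𝒜 v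
    have hsub := card_le_card (shadow_memberSubfamily_subset v 𝒜)
    have hd₁ : (1 : ℝ) ≤ #((∂ 𝒜).memberSubfamily v) := Nat.one_le_cast.2 <|
      (card_pos.2 <| nonempty_iff_ne_empty.2 <|
        mt (eq_empty_of_shadow_eq_empty hlink) hv.ne_empty).trans_le hsub
    have hk₁ : k ≠ 0 := by
      rintro rfl
      exact hd₁.not_gt (hd.trans_eq (Ring.choose_zero_right _))
    obtain ⟨y, hky, hyx, hy⟩ := exists_ringChoose_eq (by linarith) hd₁ hd.le
    calc (k + 1) * (#(𝒜.memberSubfamily v) : ℝ)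
        ≤ (y - k) * #(∂ (𝒜.memberSubfamily v)) :=
          ih hk₁ hlink hky ((Nat.cast_le.2 hsub).trans hy.ge)
      _ ≤ (x - (k + 1)) * #((∂ 𝒜).memberSubfamily v) :=
          mul_le_mul (by linarith) (Nat.cast_le.2 hsub) (Nat.cast_nonneg _) (by linarith)

theorem card_mul_ringChoose_le_card_shadow_iterate_mul {b r : ℕ} (hb : b ≠ 0)
    (h𝒜 : (𝒜 : Set (Finset α)).Sized (b + r)) (hx : (b + r : ℝ) - 1 < x)
    (h : #(∂^[r] 𝒜) ≤ Ring.choose x b) :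
    #𝒜 * Ring.choose x b ≤ #(∂^[r] 𝒜) * Ring.choose x (b + r) := by
  induction r generalizing 𝒜 with
  | zero => exact le_rfl
  | succ r ih =>
    rw [Function.iterate_succ_apply] at h ⊢
    push_cast at hx
    have hb_pos : 0 < Ring.choose x b := ringChoose_pos (by linarith)
    have hbr_pos : 0 < Ring.choose x (b + r) := ringChoose_pos (by push_cast; linarith)
    have shadow_le := ih h𝒜.shadow (by linarith) h
    have step : ((b + r : ℕ) + 1) * (#𝒜 : ℝ) ≤ (x - (b + r : ℕ)) * #(∂ 𝒜) := by
      refine succ_mul_card_le_of_card_shadow_le (by omega) h𝒜 (by push_cast; linarith) ?_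
      refine le_of_mul_le_mul_right (shadow_le.trans ?_) hb_pos
      rw [mul_comm]
      gcongr
    have hpos : (0 : ℝ) < (b + r : ℕ) + 1 := by positivity
    refine le_of_mul_le_mul_left ?_ hpos
    calc ((b + r : ℕ) + 1) * (#𝒜 * Ring.choose x b)
        = ((b + r : ℕ) + 1) * #𝒜 * Ring.choose x b := by ring
      _ ≤ (x - (b + r : ℕ)) * #(∂ 𝒜) * Ring.choose x b := by gcongr
      _ = (x - (b + r : ℕ)) * (#(∂ 𝒜) * Ring.choose x b) := by ring
      _ ≤ (x - (b + r : ℕ)) * (#(∂^[r] (∂ 𝒜)) * Ring.choose x (b + r)) := by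
        gcongr
        push_cast
        linarith
      _ = #(∂^[r] (∂ 𝒜)) * ((x - (b + r : ℕ)) * Ring.choose x (b + r)) := by ring
      _ = ((b + r : ℕ) + 1) * (#(∂^[r] (∂ 𝒜)) * Ring.choose x (b + (r + 1))) := by
        rw [← succ_mul_ringChoose_succ, add_assoc b r 1]
        ring

theorem choose_le_card_shadow_iterate {b r M : ℕ} (hb : b ≠ 0)
    (h𝒜 : (𝒜 : Set (Finset α)).Sized (b + r)) (h : M.choose (b + r) < #𝒜) :
    M.choose b ≤ #(∂^[r] 𝒜) := by
  by_contra! hlt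
  have hM : M.choose b ≤ (max M (b + r)).choose b := Nat.choose_le_choose b (le_max_left _ _)
  have key : #𝒜 * (max M (b + r)).choose b ≤ #(∂^[r] 𝒜) * (max M (b + r)).choose (b + r) := by
    have := card_mul_ringChoose_le_card_shadow_iterate_mul (x := (max M (b + r) : ℕ)) hb h𝒜
    rw [Ring.choose_natCast, Ring.choose_natCast] at this
    refine mod_cast this ?_ (mod_cast (hlt.trans_le hM).le)
    exact (sub_one_lt _).trans_le (mod_cast le_max_right M (b + r))
  have hmax : (max M (b + r)).choose (b + r) ≤ #𝒜 := by
    rcases le_total (b + r) M with hle | hle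
    · rw [max_eq_left hle]
      exact h.le
    · rw [max_eq_right hle, Nat.choose_self]
      exact h.pos
  have := key.trans (Nat.mul_le_mul_left _ hmax)
  rw [mul_comm #(∂^[r] 𝒜)] at this
  exact ((Nat.le_of_mul_le_mul_left this h.pos).trans_lt hlt).not_ge hM

end KruskalKatona

section Expansion

theorem sub_mul_ringChoose_le {b : ℕ} {x c ε : ℝ} (hε : 0 ≤ ε) (hεc : ε ≤ c)
    (hx : c + b ≤ x + 1) :
    (c - b * ε) * Ring.choose x b ≤ c * Ring.choose (x - ε) b := by
  induction b with
  | zero => simp only [Nat.cast_zero, zero_mul, sub_zero, Ring.choose_zero_right, le_refl]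
  | succ b ih =>
    push_cast at hx ⊢
    have hb : (0 : ℝ) < b + 1 := by positivity
    have hpos : 0 ≤ Ring.choose x b := (ringChoose_pos (by linarith)).le
    have hcoeff : (c - (b + 1) * ε) * (x - b) ≤ (x - ε - b) * (c - b * ε) := by
      have : 0 ≤ ε * (x - b - c + b * ε) := mul_nonneg hε (by nlinarith)
      linarith
    refine le_of_mul_le_mul_left ?_ hb
    calc (b + 1) * ((c - (b + 1) * ε) * Ring.choose x (b + 1))
        = (c - (b + 1) * ε) * ((b + 1) * Ring.choose x (b + 1)) := by ring
      _ = (c - (b + 1) * ε) * (x - b) * Ring.choose x b := by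
        rw [succ_mul_ringChoose_succ, mul_assoc]
      _ ≤ (x - ε - b) * (c - b * ε) * Ring.choose x b := by gcongr
      _ = (x - ε - b) * ((c - b * ε) * Ring.choose x b) := mul_assoc ..
      _ ≤ (x - ε - b) * (c * Ring.choose (x - ε) b) :=
        mul_le_mul_of_nonneg_left (ih (by linarith)) (by linarith)
      _ = c * ((b + 1) * Ring.choose (x - ε) (b + 1)) := by
        rw [succ_mul_ringChoose_succ]
        ring
      _ = (b + 1) * (c * Ring.choose (x - ε) (b + 1)) := by ring

theorem mul_ringChoose_add_le {b r : ℕ} {ε : ℝ} (hε : 0 ≤ ε) (hε₁ : ε ≤ 1) :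
    (b + r + 1) * Ring.choose (2 * b + r + 1 - ε) (b + r + 1) ≤
      (b + r + 1 - ε) * Ring.choose (2 * b + r + 1 - ε) b := by
  induction r with
  | zero =>
    have := succ_mul_ringChoose_succ (2 * b + 1 - ε : ℝ) b
    rw [Nat.cast_zero, add_zero, add_zero, add_zero, this]
    exact le_of_eq (by ring)
  | succ r ih =>
    set x : ℝ := 2 * b + r + 1 - ε with hx
    have hbx : (b : ℝ) < x + 1 := by
      linarith [b.cast_nonneg (α := ℝ), r.cast_nonneg (α := ℝ)]
    have hpos : 0 < Ring.choose x b := ringChoose_pos (by linarith)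
    have hle : Ring.choose x (b + r + 1) ≤ Ring.choose x b := by
      have hbr : (0 : ℝ) < b + r + 1 := by positivity
      refine le_of_mul_le_mul_left (ih.trans ?_) hbr
      gcongr
      linarith
    have hx' : (2 * b + (r + 1 : ℕ) + 1 - ε : ℝ) = x + 1 := by push_cast; ring
    have habs := succ_mul_ringChoose_add_one_succ x (b + r + 1)
    have hsucc := succ_mul_ringChoose_add_one_succ x b
    rw [succ_mul_ringChoose_succ] at hsucc
    rw [hx', ← add_assoc b r 1]
    push_cast at habs ⊢
    calc (b + (r + 1) + 1) * Ring.choose (x + 1) (b + r + 1 + 1)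
        = (x + 1) * Ring.choose x (b + r + 1) := by rw [← habs]; ring
      _ ≤ (x + 1) * Ring.choose x b := by
        gcongr
        exact b.cast_nonneg.trans hbx.le
      _ = (b + (r + 1) + 1 - ε) * Ring.choose (x + 1) b := by
        rw [← hsucc, hx]
        ring

theorem mul_card_le_of_card_shadow_iterate_le {α : Type*} [DecidableEq α]
    {𝒜 : Finset (Finset α)} {b r : ℕ} {ε : ℝ} (hb : b ≠ 0) (hr : r ≠ 0)
    (h𝒜 : (𝒜 : Set (Finset α)).Sized (b + r)) (hε : 0 ≤ ε) (hε₁ : ε ≤ 1)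
    (h : #(∂^[r] 𝒜) ≤ (1 - ε) * (2 * b + r).choose b) :
    (b + r) * (#𝒜 : ℝ) ≤ (b + r - ε) * #(∂^[r] 𝒜) := by
  obtain ⟨r, rfl⟩ := Nat.exists_eq_succ_of_ne_zero hr
  set x : ℝ := 2 * b + r + 1 - ε with hx
  set N := (#(∂^[r + 1] 𝒜) : ℝ)
  have hb_pos : (0 : ℝ) < b := Nat.cast_pos.2 (Nat.pos_of_ne_zero hb)
  have hb_one : (1 : ℝ) ≤ b := Nat.one_le_cast.2 (Nat.pos_of_ne_zero hb)
  have hbrx : (b + r : ℝ) < x := by linarith [hx]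
  have hN : N ≤ Ring.choose x b := by
    have := sub_mul_ringChoose_le (b := b) (x := (2 * b + (r + 1) : ℕ)) (c := b) hε
      (hε₁.trans hb_one) (by push_cast; linarith [r.cast_nonneg (α := ℝ)])
    rw [Ring.choose_natCast, ← mul_one_sub, mul_assoc, mul_le_mul_iff_right₀ hb_pos] at this
    refine (h.trans this).trans_eq (congrArg (Ring.choose · b) ?_)
    push_cast
    ring
  have lovasz := card_mul_ringChoose_le_card_shadow_iterate_mul hb h𝒜 (x := x)
    (by push_cast; linarith [hbrx]) hN
  refine le_of_mul_le_mul_right ?_ (ringChoose_pos (k := b) (x := x) (by linarith))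
  calc (b + (r + 1 : ℕ)) * (#𝒜 : ℝ) * Ring.choose x b
      = (b + (r + 1 : ℕ)) * (#𝒜 * Ring.choose x b) := mul_assoc ..
    _ ≤ (b + (r + 1 : ℕ)) * (N * Ring.choose x (b + (r + 1))) := by gcongr
    _ = N * ((b + r + 1) * Ring.choose x (b + r + 1)) := by
      push_cast
      ring_nf
    _ ≤ N * ((b + r + 1 - ε) * Ring.choose x b) :=
      mul_le_mul_of_nonneg_left (mul_ringChoose_add_le hε hε₁) (Nat.cast_nonneg _)
    _ = (b + (r + 1 : ℕ) - ε) * N * Ring.choose x b := by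
      push_cast
      ring

theorem mul_card_add_card_shadow_iterate_le {α : Type*} [DecidableEq α]
    {𝒜 : Finset (Finset α)} {b r c : ℕ} (hb : b ≠ 0) (hr : r ≠ 0) (hc : c ≠ 0)
    (h𝒜 : (𝒜 : Set (Finset α)).Sized (b + r))
    (h : c * #(∂^[r] 𝒜) + (2 * b + r).choose b ≤ c * (2 * b + r).choose b) :
    c * (b + r) * #𝒜 + #(∂^[r] 𝒜) ≤ c * (b + r) * #(∂^[r] 𝒜) := by
  have hc₀ : (0 : ℝ) < c := Nat.cast_pos.2 (Nat.pos_of_ne_zero hc)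
  have hc₁ : 1 / (c : ℝ) ≤ 1 := (div_le_one₀ hc₀).2 (Nat.one_le_cast.2 (Nat.pos_of_ne_zero hc))
  have hle : (#(∂^[r] 𝒜) : ℝ) ≤ (1 - 1 / c) * (2 * b + r).choose b := by
    rw [one_sub_div hc₀.ne', div_mul_eq_mul_div, le_div_iff₀ hc₀]
    have : (c * #(∂^[r] 𝒜) + (2 * b + r).choose b : ℝ) ≤ c * (2 * b + r).choose b := by
      exact_mod_cast h
    linarith
  have key := mul_le_mul_of_nonneg_left
    (mul_card_le_of_card_shadow_iterate_le hb hr h𝒜 (by positivity) hc₁ hle) hc₀.le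
  have hcancel : c * ((b + r - 1 / c) * (#(∂^[r] 𝒜) : ℝ)) =
      c * (b + r) * #(∂^[r] 𝒜) - #(∂^[r] 𝒜) := by
    field_simp
  rw [hcancel, le_sub_iff_add_le, ← mul_assoc] at key
  exact_mod_cast key

end Expansion

section CoLink

variable {X S : Finset ℕ} {F G : Finset (Finset ℕ)} {j k r : ℕ}

/-- The part `A` of `φ(F)` lying in `L_{k+r-1}`, over the ground set `X` and with the element `j`
playing the role of the most frequent one: the complements in `X \ {j}` of the members of `F`
avoiding `j`. -/
def coLink (X : Finset ℕ) (j : ℕ) (F : Finset (Finset ℕ)) : Finset (Finset ℕ) :=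
  (F.filter fun S => j ∉ S).image fun S => X.erase j \ S

theorem freq_eq_card_memberSubfamily (F : Finset (Finset ℕ)) (j : ℕ) :
    freq F j = #(F.memberSubfamily j) :=
  (card_memberSubfamily j F).symm

theorem subset_erase_of_mem_powersetCard (hG : G ⊆ powersetCard k X) (hS : S ∈ G) (hj : j ∉ S) :
    S ⊆ X.erase j :=
  subset_erase.2 ⟨(mem_powersetCard.1 (hG hS)).1, hj⟩

theorem card_coLink (hG : G ⊆ powersetCard k X) : #(coLink X j G) = #(G.filter (j ∉ ·)) := by
  refine card_image_of_injOn fun S hS T hT h => ?_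
  rw [mem_coe, mem_filter] at hS hT
  have h : X.erase j \ S = X.erase j \ T := h
  rw [← Finset.sdiff_sdiff_eq_self (subset_erase_of_mem_powersetCard hG hS.1 hS.2), h,
    Finset.sdiff_sdiff_eq_self (subset_erase_of_mem_powersetCard hG hT.1 hT.2)]

theorem freq_add_card_coLink (hG : G ⊆ powersetCard k X) :
    freq G j + #(coLink X j G) = #G := by
  rw [card_coLink hG, freq, card_filter_add_card_filter_not]

theorem coLink_subset_powersetCard (hX : #X = 2 * k + r) (hG : G ⊆ powersetCard k X)
    (hj : j ∈ X) : coLink X j G ⊆ powersetCard (k + r - 1) (X.erase j) := fun v hv => by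
  obtain ⟨S, hS, rfl⟩ := mem_image.1 hv
  rw [mem_filter] at hS
  refine mem_powersetCard.2 ⟨sdiff_subset, ?_⟩
  rw [card_sdiff_of_subset (subset_erase_of_mem_powersetCard hG hS.1 hS.2), card_erase_of_mem hj,
    (mem_powersetCard.1 (hG hS.1)).2]
  omega

theorem subset_closureH {g : Finset ℕ} {A : Finset (Finset ℕ)}
    (hA : A ⊆ powersetCard (k + r - 1) g) : A ⊆ closureH g k r A := fun _ hv =>
  mem_filter.2 ⟨hA hv, subset_biUnion_of_mem _ hv⟩

theorem closureH_mono {g : Finset ℕ} {A B : Finset (Finset ℕ)} (h : A ⊆ B) :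
    closureH g k r A ⊆ closureH g k r B :=
  monotone_filter_right _ fun _ _ hv => hv.trans (biUnion_subset_biUnion_of_subset_left _ h)

theorem sized_closureH (hk : 1 ≤ k) (g : Finset ℕ) (A : Finset (Finset ℕ)) :
    (closureH g k r A : Set (Finset ℕ)).Sized (k - 1 + r) := fun v hv => by
  rw [(mem_powersetCard.1 (mem_filter.1 hv).1).2]
  omega

theorem shadow_iterate_closureH_subset (hk : 1 ≤ k) (g : Finset ℕ) (A : Finset (Finset ℕ)) :
    ∂^[r] (closureH g k r A) ⊆ nbhdH k A := fun t ht => by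
  obtain ⟨v, hv, htv, hcard⟩ := mem_shadow_iterate_iff_exists_mem_card_add.1 ht
  have := sized_closureH hk g A hv
  exact (mem_filter.1 hv).2 (mem_powersetCard.2 ⟨htv, by omega⟩)

theorem disjoint_memberSubfamily_nbhdH_coLink (hint : (G : Set (Finset ℕ)).Intersecting) :
    Disjoint (G.memberSubfamily j) (nbhdH k (coLink X j G)) := by
  refine disjoint_left.2 fun S hSj hS => ?_
  obtain ⟨hjS, -⟩ := mem_memberSubfamily.1 hSj
  obtain ⟨v, hv, hSv⟩ := mem_biUnion.1 hS
  obtain ⟨T, hT, rfl⟩ := mem_image.1 hv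
  rw [mem_filter] at hT
  refine hint hjS hT.1 (disjoint_insert_left.2 ⟨hT.2, ?_⟩)
  exact disjoint_of_subset_left (mem_powersetCard.1 hSv).1 sdiff_disjoint

theorem freq_add_card_nbhdH_le (hG : G ⊆ powersetCard k X)
    (hint : (G : Set (Finset ℕ)).Intersecting) (hj : j ∈ X) :
    freq G j + #(nbhdH k (coLink X j G)) ≤ (#X - 1).choose (k - 1) := by
  rw [freq_eq_card_memberSubfamily,
    ← card_union_of_disjoint (disjoint_memberSubfamily_nbhdH_coLink hint),
    ← card_erase_of_mem hj, ← card_powersetCard]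
  refine card_le_card (union_subset (fun S hS => ?_) (biUnion_subset.2 fun v hv => ?_))
  · obtain ⟨hjS, hjn⟩ := mem_memberSubfamily.1 hS
    obtain ⟨hsub, hcard⟩ := mem_powersetCard.1 (hG hjS)
    rw [card_insert_of_notMem hjn] at hcard
    exact mem_powersetCard.2
      ⟨subset_erase.2 ⟨(subset_insert j S).trans hsub, hjn⟩, by omega⟩
  · obtain ⟨T, -, rfl⟩ := mem_image.1 hv
    exact powersetCard_mono sdiff_subset

theorem mul_card_le_card_mul_freq (hG : G ⊆ powersetCard k X)
    (hmax : ∀ y ∈ X, freq G y ≤ freq G j) : k * #G ≤ #X * freq G j := by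
  rw [← sum_card_memberSubfamily (fun S hS => (mem_powersetCard.1 (hG hS)).2)
    fun S hS => (mem_powersetCard.1 (hG hS)).1]
  exact sum_le_card_nsmul _ _ _ fun y hy => (freq_eq_card_memberSubfamily G y).ge.trans (hmax y hy)

theorem card_nbhdH_coLink_le {D : ℕ} (hk : 1 ≤ k) (hkX : k + 1 ≤ #X)
    (hD : 2 * k * D ≤ (#X - 2).choose (k - 1)) (hG : G ⊆ powersetCard k X)
    (hint : (G : Set (Finset ℕ)).Intersecting) (hj : j ∈ X)
    (hmax : ∀ y ∈ X, freq G y ≤ freq G j) (hlarge : (#X - 1).choose (k - 1) ≤ #G + D) :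
    2 * #X * #(nbhdH k (coLink X j G)) + (#X - 2).choose (k - 1) ≤
      2 * #X * (#X - 2).choose (k - 1) := by
  have hsum := freq_add_card_nbhdH_le hG hint hj
  have hdeg := mul_card_le_card_mul_freq hG hmax
  obtain ⟨b, rfl⟩ := Nat.exists_eq_add_of_le' hk
  obtain ⟨q, hq⟩ := Nat.exists_eq_add_of_le hkX
  have hY := Nat.choose_mul_succ_eq (b + q) b
  rw [show #X - 2 = b + q by omega, Nat.add_sub_cancel] at hD ⊢
  rw [show #X - 1 = b + q + 1 by omega, Nat.add_sub_cancel] at hsum hlarge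
  rw [show b + q + 1 - b = q + 1 by omega] at hY
  have hsum' := Nat.mul_le_mul_left #X hsum
  have hlarge' := Nat.mul_le_mul_left (b + 1) hlarge
  rw [hq] at hsum' hdeg ⊢
  nlinarith

theorem card_closureH_coLink_le {m D : ℕ} (hk : 2 ≤ k) (hr : m + 2 ≤ r) (hX : #X = 2 * k + r)
    (hD : 2 * #X ^ 2 * D ≤ (2 * k + m).choose (k - 1)) (hG : G ⊆ powersetCard k X)
    (hint : (G : Set (Finset ℕ)).Intersecting) (hj : j ∈ X)
    (hmax : ∀ y ∈ X, freq G y ≤ freq G j) (hlarge : (#X - 1).choose (k - 1) < #G + D) :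
    #(closureH (X.erase j) k r (coLink X j G)) ≤ (2 * k + m).choose (k + r - 1) := by
  by_contra! hbig
  set 𝒜 := closureH (X.erase j) k r (coLink X j G)
  set N := #(∂^[r] 𝒜)
  have hkr : k - 1 + r = k + r - 1 := by omega
  have hsized : (𝒜 : Set (Finset ℕ)).Sized (k - 1 + r) := sized_closureH (by omega) _ _
  have hN_ge : 2 * #X ^ 2 * D ≤ N :=
    hD.trans (choose_le_card_shadow_iterate (by omega) hsized (hkr ▸ hbig))
  have hN_le : N ≤ #(nbhdH k (coLink X j G)) :=
    card_le_card (shadow_iterate_closureH_subset (by omega) _ _)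
  have hexp : 2 * #X * (k - 1 + r) * #𝒜 + N ≤ 2 * #X * (k - 1 + r) * N := by
    refine mul_card_add_card_shadow_iterate_le (by omega) (by omega) (by omega) hsized ?_
    have hYD : 2 * k * D ≤ (#X - 2).choose (k - 1) := calc
      2 * k * D ≤ 2 * #X ^ 2 * D := by
        gcongr
        nlinarith
      _ ≤ (2 * k + m).choose (k - 1) := hD
      _ ≤ (#X - 2).choose (k - 1) := Nat.choose_le_choose _ (by omega)
    rw [show 2 * (k - 1) + r = #X - 2 by omega]
    exact (Nat.add_le_add_right (Nat.mul_le_mul_left _ hN_le) _).trans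
      (card_nbhdH_coLink_le (by omega) (by omega) hYD hG hint hj hmax hlarge.le)
  have hN_lt : N < #𝒜 + D := by
    have hcoLink : #(coLink X j G) ≤ #𝒜 :=
      card_le_card (subset_closureH (coLink_subset_powersetCard hX hG hj))
    have := freq_add_card_coLink (j := j) hG
    have := freq_add_card_nbhdH_le hG hint hj
    omega
  have hN_lt_mul : N < 2 * #X * (k - 1 + r) * D := by
    have hpos : 0 < 2 * #X * (k - 1 + r) := Nat.mul_pos (by omega) (by omega)
    have := Nat.mul_lt_mul_of_pos_left hN_lt hpos
    rw [mul_add _ #𝒜 D] at this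
    omega
  refine hN_lt_mul.not_ge (le_trans ?_ hN_ge)
  rw [sq, ← mul_assoc]
  gcongr
  omega

end CoLink

section Generators

theorem card_le_four_pow_of_cross_intersecting {α : Type*} {X : Finset α} {T : Finset (Finset α)}
    {k : ℕ} {h : Finset α → Finset α} (hX : 2 * k ≤ #X)
    (hT : T ⊆ powersetCard k X) (hh : ∀ S ∈ T, h S ∈ powersetCard k X)
    (hdisj : ∀ S ∈ T, Disjoint (h S) S)
    (hmeet : ∀ S ∈ T, ∀ S' ∈ T, S' ≠ S → ¬Disjoint (h S) S') : #T ≤ 4 ^ k := by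
  classical
  -- The intervals `[S, X \ h S]` of the Boolean lattice are pairwise disjoint.
  have hIcc : (T : Set (Finset α)).PairwiseDisjoint fun S => Finset.Icc S (X \ h S) := by
    refine fun S hS S' hS' hne => disjoint_left.2 fun V hV hV' => ?_
    rw [Finset.mem_Icc] at hV hV'
    exact hmeet S hS S' hS' hne.symm
      (disjoint_of_subset_right (hV'.1.trans hV.2) disjoint_sdiff)
  have hcard (S) (hS : S ∈ T) : #(Finset.Icc S (X \ h S)) = 2 ^ (#X - 2 * k) := by
    obtain ⟨hSX, hSk⟩ := mem_powersetCard.1 (hT hS)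
    obtain ⟨hhX, hhk⟩ := mem_powersetCard.1 (hh S hS)
    rw [card_Icc_finset (subset_sdiff.2 ⟨hSX, (hdisj S hS).symm⟩), card_sdiff_of_subset hhX, hhk,
      hSk, Nat.sub_sub, two_mul]
  have hle : #(T.biUnion fun S => Finset.Icc S (X \ h S)) ≤ #X.powerset :=
    card_le_card <| biUnion_subset.2 fun S _ V hV =>
      mem_powerset.2 ((Finset.mem_Icc.1 hV).2.trans sdiff_subset)
  rw [card_biUnion hIcc, sum_const_nat hcard, card_powerset, ← Nat.add_sub_of_le hX, pow_add,
    Nat.add_sub_cancel_left, pow_mul] at hle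
  exact Nat.le_of_mul_le_mul_right hle (by positivity)

variable {α : Type*} [DecidableEq α] {X : Finset α} {W F G T : Finset (Finset α)} {k : ℕ}

/-- The members of `W` meeting every member of `T`. When this family is intersecting, `T` is a
generating family for it. -/
def meetAll (W T : Finset (Finset α)) : Finset (Finset α) :=
  W.filter fun H => ∀ S ∈ T, ¬Disjoint H S

theorem mem_meetAll {H : Finset α} : H ∈ meetAll W T ↔ H ∈ W ∧ ∀ S ∈ T, ¬Disjoint H S :=
  mem_filter

theorem meetAll_anti (W : Finset (Finset α)) : Antitone (meetAll W) := fun _ _ h _ hH =>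
  mem_meetAll.2 ⟨(mem_meetAll.1 hH).1, fun S hS => (mem_meetAll.1 hH).2 S (h hS)⟩

theorem meetAll_eq_self_of_maximal (hW : ∅ ∉ W)
    (hG : Maximal (fun G => G ⊆ W ∧ (G : Set (Finset α)).Intersecting) G) : meetAll W G = G := by
  refine Subset.antisymm (fun H hH => ?_) fun H hH =>
    mem_meetAll.2 ⟨hG.prop.1 hH, fun S hS => hG.prop.2 hH hS⟩
  obtain ⟨hHW, hHG⟩ := mem_meetAll.1 hH
  refine hG.le_of_ge ⟨insert_subset hHW hG.prop.1, ?_⟩ (subset_insert H G) (mem_insert_self H G)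
  rw [coe_insert]
  exact hG.prop.2.insert (ne_of_mem_of_not_mem hHW hW) hHG

theorem exists_disjoint_of_minimal_meetAll
    (hT : Minimal (fun T => meetAll W T = G) T) {S : Finset α} (hS : S ∈ T) :
    ∃ H ∈ W, Disjoint H S ∧ ∀ S' ∈ T, S' ≠ S → ¬Disjoint H S' := by
  have hne : meetAll W T ≠ meetAll W (T.erase S) := fun h =>
    hT.not_prop_of_lt (erase_ssubset hS) (h.symm.trans hT.prop)
  obtain ⟨H, hH, hHT⟩ :=
    exists_of_ssubset ((meetAll_anti W (erase_subset S T)).ssubset_of_ne hne)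
  obtain ⟨hHW, hHmeet⟩ := mem_meetAll.1 hH
  have hHmeet (S') (hS' : S' ∈ T) (hne : S' ≠ S) : ¬Disjoint H S' :=
    hHmeet S' (mem_erase.2 ⟨hne, hS'⟩)
  refine ⟨H, hHW, ?_, hHmeet⟩
  by_contra hHS
  refine hHT (mem_meetAll.2 ⟨hHW, fun S' hS' => ?_⟩)
  rcases eq_or_ne S' S with rfl | hne
  exacts [hHS, hHmeet S' hS' hne]

theorem exists_generator (hk : 1 ≤ k) (hX : 2 * k ≤ #X) (hF : F ⊆ powersetCard k X)
    (hint : (F : Set (Finset α)).Intersecting) :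
    ∃ T ⊆ powersetCard k X, #T ≤ 4 ^ k ∧ F ⊆ meetAll (powersetCard k X) T ∧
      (meetAll (powersetCard k X) T : Set (Finset α)).Intersecting := by
  set W := powersetCard k X with hW
  have hW_ne : ∅ ∉ W := fun h => by
    rw [← (mem_powersetCard.1 h).2, card_empty] at hk
    omega
  have hfin : {G | G ⊆ W ∧ (G : Set (Finset α)).Intersecting}.Finite :=
    W.powerset.finite_toSet.subset fun G hG => mem_powerset.2 hG.1
  obtain ⟨G, hFG, hG⟩ := hfin.exists_le_maximal ⟨hF, hint⟩
  obtain ⟨T, hTG, hT⟩ := exists_minimal_le_of_wellFoundedLT (fun T => meetAll W T = G) G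
    (meetAll_eq_self_of_maximal hW_ne hG)
  choose! h hhW hdisj hmeet using fun S => exists_disjoint_of_minimal_meetAll hT (S := S)
  have hTW : T ⊆ W := hTG.trans hG.prop.1
  refine ⟨T, hTW, card_le_four_pow_of_cross_intersecting hX hTW hhW hdisj hmeet, ?_, ?_⟩
  · rwa [hT.prop]
  · rw [hT.prop]
    exact hG.prop.2

end Generators

section Counting

variable {α : Type*}

theorem card_filter_card_le (W : Finset α) (s : ℕ) :
    #(W.powerset.filter (#· ≤ s)) ≤ (#W + 1) ^ s := by
  classical
  induction s with
  | zero =>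
    have hempty : W.powerset.filter (#· ≤ 0) ⊆ {∅} := fun E hE =>
      mem_singleton.2 (card_eq_zero.1 (Nat.le_zero.1 (mem_filter.1 hE).2))
    exact card_le_card hempty
  | succ s ih =>
    have hcover : W.powerset.filter (#· ≤ s + 1) ⊆
        (W.powerset.filter (#· ≤ s) ×ˢ insertNone W).image
          fun p => p.2.elim p.1 (insert · p.1) := fun E hE => by
      rw [mem_filter, mem_powerset] at hE
      rw [mem_image]
      rcases E.eq_empty_or_nonempty with rfl | ⟨a, ha⟩
      · exact ⟨(∅, none), by simp, rfl⟩
      · refine ⟨(E.erase a, some a), ?_, insert_erase ha⟩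
        rw [mem_product, mem_filter, mem_powerset, some_mem_insertNone, card_erase_of_mem ha]
        exact ⟨⟨(erase_subset _ _).trans hE.1, by omega⟩, hE.1 ha⟩
    calc #(W.powerset.filter (#· ≤ s + 1))
        ≤ #(W.powerset.filter (#· ≤ s) ×ˢ insertNone W) := (card_le_card hcover).trans card_image_le
      _ ≤ (#W + 1) ^ s * (#W + 1) := by
        rw [card_product, card_insertNone]
        exact Nat.mul_le_mul_right _ ih
      _ = (#W + 1) ^ (s + 1) := (pow_succ _ _).symm

theorem card_filter_card_sdiff_le [DecidableEq α] (W R : Finset α) (s : ℕ) :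
    #(W.powerset.filter fun F => #(F \ R) ≤ s) ≤ (#W + 1) ^ s * 2 ^ #R := by
  have hcover : (W.powerset.filter fun F => #(F \ R) ≤ s) ⊆
      (W.powerset.filter (#· ≤ s) ×ˢ R.powerset).image fun p => p.1 ∪ p.2 := fun F hF => by
    rw [mem_filter, mem_powerset] at hF
    refine mem_image.2 ⟨(F \ R, F ∩ R), ?_, sdiff_union_inter F R⟩
    rw [mem_product, mem_filter, mem_powerset, mem_powerset]
    exact ⟨⟨sdiff_subset.trans hF.1, hF.2⟩, inter_subset_right⟩
  refine (card_le_card hcover).trans (card_image_le.trans ?_)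
  rw [card_product, card_powerset]
  exact Nat.mul_le_mul_right _ (card_filter_card_le W s)

theorem card_powersetCard_add_one_le {k : ℕ} (hk : 1 ≤ k) (X : Finset α) :
    #(powersetCard k X) + 1 ≤ 2 ^ #X := by
  rw [← card_powerset]
  refine card_lt_card ((ssubset_iff_of_subset fun S hS =>
    mem_powerset.2 (mem_powersetCard.1 hS).1).2 ⟨∅, empty_mem_powerset X, fun h => ?_⟩)
  rw [← (mem_powersetCard.1 h).2, card_empty] at hk
  omega

theorem card_filter_mem_and_mem_le [DecidableEq α] (k : ℕ) {X : Finset α} {i j : α} (hi : i ∈ X)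
    (hj : j ∈ X) (hij : i ≠ j) :
    #((powersetCard (k + 2) X).filter fun S => i ∈ S ∧ j ∈ S) ≤ (#X - 2).choose k := by
  have hcard : #((X.erase i).erase j) = #X - 2 := by
    rw [card_erase_of_mem (mem_erase.2 ⟨hij.symm, hj⟩), card_erase_of_mem hi, Nat.sub_sub]
  rw [← hcard, ← card_powersetCard]
  have hins (S : Finset α) (hS : i ∈ S ∧ j ∈ S) :
      insert i (insert j ((S.erase i).erase j)) = S := by
    rw [insert_erase (mem_erase.2 ⟨hij.symm, hS.2⟩), insert_erase hS.1]
  refine card_le_card_of_injOn (fun S => (S.erase i).erase j) (fun S hS => ?_)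
    fun S hS T hT h => ?_
  · obtain ⟨hS, hiS, hjS⟩ := mem_filter.1 hS
    obtain ⟨hSX, hSk⟩ := mem_powersetCard.1 hS
    refine mem_powersetCard.2 ⟨erase_subset_erase _ (erase_subset_erase _ hSX), ?_⟩
    rw [card_erase_of_mem (mem_erase.2 ⟨hij.symm, hjS⟩), card_erase_of_mem hiS, hSk]
    rfl
  · have h : (S.erase i).erase j = (T.erase i).erase j := h
    rw [← hins S (mem_filter.1 hS).2, h, hins T (mem_filter.1 hT).2]

end Counting

section MostFrequent

variable {F G : Finset (Finset ℕ)} {j k n r s : ℕ}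

theorem card_Icc_one (n : ℕ) : #(Finset.Icc 1 n) = n := by
  rw [Nat.card_Icc, Nat.add_sub_cancel]

theorem mostFreq_spec (hn : 1 ≤ n) (F : Finset (Finset ℕ)) :
    mostFreq n F ∈ Finset.Icc 1 n ∧
      ∀ y ∈ Finset.Icc 1 n, freq F y ≤ freq F (mostFreq n F) := by
  obtain ⟨x, hx, hmax⟩ := exists_max_image (Finset.Icc 1 n) (freq F) ⟨1, mem_Icc.2 ⟨le_rfl, hn⟩⟩
  unfold mostFreq
  dsimp only
  -- The decidability instance inside `mostFreq` is only found by unification.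
  split_ifs with h
  · exact (@mem_filter _ _ (_) _ _).1 (max'_mem _ h)
  · exact absurd ⟨x, (@mem_filter _ _ (_) _ _).2 ⟨hx, hmax⟩⟩ h

/-- The condition `|[φ(F) ∩ L_{k+r-1}]| > s` on a family `F` of subsets of `[n]`. -/
def LargeClosure (n k r s : ℕ) (F : Finset (Finset ℕ)) : Prop :=
  s < #(closureH ((Finset.Icc 1 n).erase (mostFreq n F)) k r
    (coLink (Finset.Icc 1 n) (mostFreq n F) F))

theorem mostFreq_ne_of_largeClosure (hFG : F ⊆ G) (hF : LargeClosure n k r s F)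
    (hs : #(closureH ((Finset.Icc 1 n).erase j) k r (coLink (Finset.Icc 1 n) j G)) ≤ s) :
    mostFreq n F ≠ j := by
  rintro rfl
  have hsub := image_subset_image (f := fun S => (Finset.Icc 1 n).erase (mostFreq n F) \ S)
    (filter_subset_filter (mostFreq n F ∉ ·) hFG)
  exact hF.not_ge ((card_le_card (closureH_mono hsub)).trans hs)

theorem card_filter_not_mem_and_mem_le {f : ℕ} (h : freq F j ≤ freq F f) :
    #(F.filter fun S => ¬(j ∈ S ∧ f ∈ S)) ≤ 2 * #(F.filter (j ∉ ·)) := by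
  have hcover : F.filter (fun S => ¬(j ∈ S ∧ f ∈ S)) ⊆
      F.filter (j ∉ ·) ∪ (F.filter (j ∈ ·) \ F.filter (f ∈ ·)) := fun S hS => by
    simp only [mem_union, mem_sdiff, mem_filter] at hS ⊢
    tauto
  have hsub : F.filter (f ∈ ·) \ F.filter (j ∈ ·) ⊆ F.filter (j ∉ ·) := fun S hS => by
    simp only [mem_sdiff, mem_filter] at hS ⊢
    tauto
  calc #(F.filter fun S => ¬(j ∈ S ∧ f ∈ S))
      ≤ #(F.filter (j ∉ ·)) + #(F.filter (j ∈ ·) \ F.filter (f ∈ ·)) :=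
        (card_le_card hcover).trans (card_union_le _ _)
    _ ≤ #(F.filter (j ∉ ·)) + #(F.filter (j ∉ ·)) :=
        Nat.add_le_add_left ((card_sdiff_le_card_sdiff_iff.2 h).trans (card_le_card hsub)) _
    _ = 2 * #(F.filter (j ∉ ·)) := (two_mul _).symm

theorem card_coLink_le_card_closureH (hn : n = 2 * k + r) (hG : G ⊆ powersetCard k (Finset.Icc 1 n))
    (hj : j ∈ Finset.Icc 1 n) : #(coLink (Finset.Icc 1 n) j G) ≤
      #(closureH ((Finset.Icc 1 n).erase j) k r (coLink (Finset.Icc 1 n) j G)) :=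
  card_le_card (subset_closureH (coLink_subset_powersetCard ((card_Icc_one n).trans hn) hG hj))

open Classical in
theorem filter_largeClosure_subset (hn : n = 2 * k + r) (hk : 1 ≤ k)
    (hG : G ⊆ powersetCard k (Finset.Icc 1 n)) (hj : j ∈ Finset.Icc 1 n)
    (hs : #(closureH ((Finset.Icc 1 n).erase j) k r (coLink (Finset.Icc 1 n) j G)) ≤ s) :
    G.powerset.filter (LargeClosure n k r s) ⊆ ((Finset.Icc 1 n).erase j).biUnion fun f =>
      (powersetCard k (Finset.Icc 1 n)).powerset.filter fun F =>
        #(F \ (powersetCard k (Finset.Icc 1 n)).filter fun S => j ∈ S ∧ f ∈ S) ≤ 2 * s := by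
  intro F hF
  obtain ⟨hFG, hlarge⟩ := mem_filter.1 hF
  rw [mem_powerset] at hFG
  obtain ⟨hf, hmax⟩ := mostFreq_spec (n := n) (by omega) F
  refine mem_biUnion.2 ⟨mostFreq n F,
    mem_erase.2 ⟨mostFreq_ne_of_largeClosure hFG hlarge hs, hf⟩,
    mem_filter.2 ⟨mem_powerset.2 (hFG.trans hG), ?_⟩⟩
  have hsub : (F \ (powersetCard k (Finset.Icc 1 n)).filter fun S => j ∈ S ∧ mostFreq n F ∈ S) ⊆
      F.filter fun S => ¬(j ∈ S ∧ mostFreq n F ∈ S) := fun S hS => by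
    obtain ⟨hSF, hS⟩ := mem_sdiff.1 hS
    exact mem_filter.2 ⟨hSF, fun h => hS (mem_filter.2 ⟨hG (hFG hSF), h⟩)⟩
  have hcoLink : #(G.filter (j ∉ ·)) ≤ s := by
    rw [← card_coLink (X := Finset.Icc 1 n) hG]
    exact (card_coLink_le_card_closureH hn hG hj).trans hs
  calc _ ≤ 2 * #(F.filter (j ∉ ·)) :=
        (card_le_card hsub).trans (card_filter_not_mem_and_mem_le (hmax j hj))
    _ ≤ 2 * s := Nat.mul_le_mul_left _
        ((card_le_card (filter_subset_filter _ hFG)).trans hcoLink)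

open Classical in
theorem card_filter_largeClosure_le (hn : n = 2 * k + r) (hk : 2 ≤ k)
    (hG : G ⊆ powersetCard k (Finset.Icc 1 n)) (hj : j ∈ Finset.Icc 1 n)
    (hs : #(closureH ((Finset.Icc 1 n).erase j) k r (coLink (Finset.Icc 1 n) j G)) ≤ s) :
    #(G.powerset.filter (LargeClosure n k r s)) ≤
      2 ^ (n + 2 * n * s + (n - 2).choose (k - 2)) := by
  have hW := card_powersetCard_add_one_le (k := k) (by omega) (Finset.Icc 1 n)
  rw [card_Icc_one] at hW
  have hfiber (f) (hf : f ∈ (Finset.Icc 1 n).erase j) :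
      #((powersetCard k (Finset.Icc 1 n)).powerset.filter fun F =>
        #(F \ (powersetCard k (Finset.Icc 1 n)).filter fun S => j ∈ S ∧ f ∈ S) ≤ 2 * s) ≤
      2 ^ (2 * n * s + (n - 2).choose (k - 2)) := by
    have hR := card_filter_mem_and_mem_le (k - 2) hj (mem_of_mem_erase hf) (ne_of_mem_erase hf).symm
    rw [card_Icc_one, Nat.sub_add_cancel hk] at hR
    refine (card_filter_card_sdiff_le _ _ _).trans ?_
    rw [pow_add, show 2 * n * s = n * (2 * s) by ring, pow_mul _ n]
    exact Nat.mul_le_mul (Nat.pow_le_pow_left hW _) (Nat.pow_le_pow_right two_pos hR)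
  calc #(G.powerset.filter (LargeClosure n k r s))
      ≤ #((Finset.Icc 1 n).erase j) * 2 ^ (2 * n * s + (n - 2).choose (k - 2)) :=
        (card_le_card (filter_largeClosure_subset hn (by omega) hG hj hs)).trans
          (card_biUnion_le_card_mul _ _ _ hfiber)
    _ ≤ 2 ^ n * 2 ^ (2 * n * s + (n - 2).choose (k - 2)) := by
        refine Nat.mul_le_mul_right _ ((card_le_card (erase_subset _ _)).trans ?_)
        rw [card_Icc_one]
        exact Nat.lt_two_pow_self.le
    _ = 2 ^ (n + 2 * n * s + (n - 2).choose (k - 2)) := by rw [← pow_add, add_assoc]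

open Classical in
theorem card_filter_largeClosure_mul_le {m D : ℕ} (hn : n = 2 * k + r) (hk : 2 ≤ k)
    (hr : m + 2 ≤ r) (hD : 2 * n ^ 2 * D ≤ (2 * k + m).choose (k - 1))
    (hs : n + 2 * n * (2 * k + m).choose (k + r - 1) + D ≤ (n - 2).choose (k - 1))
    (hG : G ⊆ powersetCard k (Finset.Icc 1 n)) (hint : (G : Set (Finset ℕ)).Intersecting) :
    #(G.powerset.filter (LargeClosure n k r ((2 * k + m).choose (k + r - 1)))) * 2 ^ D ≤
      2 ^ (n - 1).choose (k - 1) := by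
  rcases le_or_gt (#G + D) ((n - 1).choose (k - 1)) with hsmall | hlarge
  · calc _ ≤ #G.powerset * 2 ^ D := Nat.mul_le_mul_right _ (card_filter_le _ _)
      _ = 2 ^ (#G + D) := by rw [card_powerset, pow_add]
      _ ≤ 2 ^ (n - 1).choose (k - 1) := Nat.pow_le_pow_right two_pos hsmall
  · obtain ⟨hj, hmax⟩ := mostFreq_spec (n := n) (by omega) G
    have hX := card_Icc_one n
    have hclosure := card_closureH_coLink_le hk hr (hX.trans hn) (by rwa [hX]) hG hint hj hmax
      (by rwa [hX])
    have hpascal := Nat.choose_eq_choose_pred_add (n := n - 1) (k := k - 1) (by omega) (by omega)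
    rw [show n - 1 - 1 = n - 2 from rfl, show k - 1 - 1 = k - 2 from rfl] at hpascal
    calc _ ≤ 2 ^ (n + 2 * n * _ + (n - 2).choose (k - 2)) * 2 ^ D :=
          Nat.mul_le_mul_right _ (card_filter_largeClosure_le hn hk hG hj hclosure)
      _ ≤ 2 ^ (n - 1).choose (k - 1) := by
          rw [← pow_add]
          exact Nat.pow_le_pow_right two_pos (by omega)

open Classical in
theorem card_intersecting_largeClosure_mul_le {m : ℕ} (hn : n = 2 * k + r) (hk : 2 ≤ k)
    (hr : m + 2 ≤ r) (hD : 4 * n ^ 3 * 4 ^ k ≤ (2 * k + m).choose (k - 1))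
    (hs : n + 2 * n * (2 * k + m).choose (k + r - 1) + 2 * n * 4 ^ k ≤ (n - 2).choose (k - 1)) :
    #((powersetCard k (Finset.Icc 1 n)).powerset.filter fun F : Finset (Finset ℕ) =>
        (F : Set (Finset ℕ)).Intersecting ∧
          LargeClosure n k r ((2 * k + m).choose (k + r - 1)) F) * 2 ^ (n * 4 ^ k) ≤
      2 ^ (n - 1).choose (k - 1) := by
  set W := powersetCard k (Finset.Icc 1 n)
  set P := LargeClosure n k r ((2 * k + m).choose (k + r - 1))
  set 𝓕 := W.powerset.filter fun F : Finset (Finset ℕ) => (F : Set (Finset ℕ)).Intersecting ∧ P F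
  set 𝒯 := W.powerset.filter fun T => #T ≤ 4 ^ k ∧ (meetAll W T : Set (Finset ℕ)).Intersecting
  have hcover : 𝓕 ⊆ 𝒯.biUnion fun T => (meetAll W T).powerset.filter P := fun F hF => by
    obtain ⟨hFW, hint, hP⟩ := mem_filter.1 hF
    obtain ⟨T, hTW, hT, hFT, hTint⟩ :=
      exists_generator (by omega) (by rw [card_Icc_one]; omega) (mem_powerset.1 hFW) hint
    exact mem_biUnion.2 ⟨T, mem_filter.2 ⟨mem_powerset.2 hTW, hT, hTint⟩,
      mem_filter.2 ⟨mem_powerset.2 hFT, hP⟩⟩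
  have h𝒯 : #𝒯 ≤ 2 ^ (n * 4 ^ k) := by
    have hW := card_powersetCard_add_one_le (k := k) (by omega) (Finset.Icc 1 n)
    rw [card_Icc_one] at hW
    rw [pow_mul]
    exact (card_le_card (monotone_filter_right _ fun _ _ h => h.1)).trans
      ((card_filter_card_le W (4 ^ k)).trans (Nat.pow_le_pow_left hW _))
  have hfiber (T) (hT : T ∈ 𝒯) : #((meetAll W T).powerset.filter P) * 2 ^ (2 * n * 4 ^ k) ≤
      2 ^ (n - 1).choose (k - 1) :=
    card_filter_largeClosure_mul_le hn hk hr (by linarith [hD]) hs (filter_subset _ _)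
      (mem_filter.1 hT).2.2
  refine Nat.le_of_mul_le_mul_right (c := 2 ^ (n * 4 ^ k)) ?_ (by positivity)
  calc _ = #𝓕 * 2 ^ (2 * n * 4 ^ k) := by ring
    _ ≤ (∑ T ∈ 𝒯, #((meetAll W T).powerset.filter P)) * 2 ^ (2 * n * 4 ^ k) :=
        Nat.mul_le_mul_right _ ((card_le_card hcover).trans card_biUnion_le)
    _ ≤ #𝒯 * 2 ^ (n - 1).choose (k - 1) := by
        rw [sum_mul]
        exact sum_le_card_nsmul _ _ _ hfiber
    _ ≤ 2 ^ (n - 1).choose (k - 1) * 2 ^ (n * 4 ^ k) := by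
        rw [mul_comm]
        exact Nat.mul_le_mul_left _ h𝒯

end MostFrequent

section BinomialBounds

theorem mul_choose_le_mul_choose_succ {a b N c : ℕ} (h : a * (N + 1) ≤ b * (N + 1) + a * c) :
    a * N.choose c ≤ b * (N + 1).choose c := by
  rcases lt_or_ge N c with hNc | hcN
  · rw [Nat.choose_eq_zero_of_lt hNc, mul_zero]
    exact Nat.zero_le _
  · obtain ⟨d, rfl⟩ := Nat.exists_eq_add_of_le hcN
    have hsucc := Nat.choose_mul_succ_eq (c + d) c
    rw [show c + d + 1 - c = d + 1 by omega] at hsucc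
    have hratio : a * (d + 1) ≤ b * (c + d + 1) := by linarith
    refine Nat.le_of_mul_le_mul_right (c := d + 1) ?_ d.succ_pos
    calc a * (c + d).choose c * (d + 1) = (c + d).choose c * (a * (d + 1)) := by ring
      _ ≤ (c + d).choose c * (b * (c + d + 1)) := Nat.mul_le_mul_left _ hratio
      _ = b * ((c + d).choose c * (c + d + 1)) := by ring
      _ = b * (c + d + 1).choose c * (d + 1) := by rw [hsucc, mul_assoc]

theorem pow_mul_choose_le_pow_mul_choose_add {a b N c m : ℕ} (hba : b ≤ a)
    (h : a * (N + m) ≤ b * (N + m) + a * c) :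
    a ^ m * N.choose c ≤ b ^ m * (N + m).choose c := by
  induction m with
  | zero => rfl
  | succ m ih =>
    calc a ^ (m + 1) * N.choose c = a * (a ^ m * N.choose c) := by ring
      _ ≤ a * (b ^ m * (N + m).choose c) := Nat.mul_le_mul_left _ (ih (by linarith))
      _ = b ^ m * (a * (N + m).choose c) := by ring
      _ ≤ b ^ m * (b * (N + (m + 1)).choose c) :=
        Nat.mul_le_mul_left _ (mul_choose_le_mul_choose_succ h)
      _ = b ^ (m + 1) * (N + (m + 1)).choose c := by ring

theorem succ_pow_mul_sub_le (M p : ℕ) : (M + 1) ^ p * (M + 1 - p) ≤ (M + 1) * M ^ p := by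
  induction p with
  | zero => simp only [pow_zero, Nat.sub_zero, one_mul, mul_one, le_refl]
  | succ p ih =>
    have hstep : (M + 1) * (M + 1 - (p + 1)) ≤ (M + 1 - p) * M := by
      rcases le_or_gt p M with hp | hp
      · obtain ⟨d, rfl⟩ := Nat.exists_eq_add_of_le hp
        rw [show p + d + 1 - (p + 1) = d by omega, show p + d + 1 - p = d + 1 by omega]
        nlinarith
      · rw [show M + 1 - (p + 1) = 0 by omega, mul_zero]
        exact Nat.zero_le _
    calc (M + 1) ^ (p + 1) * (M + 1 - (p + 1))
        = (M + 1) ^ p * ((M + 1) * (M + 1 - (p + 1))) := by ring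
      _ ≤ (M + 1) ^ p * ((M + 1 - p) * M) := Nat.mul_le_mul_left _ hstep
      _ = (M + 1) ^ p * (M + 1 - p) * M := by ring
      _ ≤ (M + 1) * M ^ p * M := Nat.mul_le_mul_right _ ih
      _ = (M + 1) * M ^ (p + 1) := by ring

theorem mul_pow_le_choose_of_le {a p c M N : ℕ} (hpc : p ≤ c) (hcM : c ≤ M) (hMN : M ≤ N)
    (hM : a * M ^ p ≤ M.choose c) : a * N ^ p ≤ N.choose c := by
  induction N, hMN using Nat.le_induction with
  | base => exact hM
  | succ N hN ih =>
    refine Nat.le_of_mul_le_mul_right (c := N + 1 - c) ?_ (by omega)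
    calc a * (N + 1) ^ p * (N + 1 - c) ≤ a * ((N + 1) ^ p * (N + 1 - p)) := by
          rw [mul_assoc]
          gcongr
      _ ≤ a * ((N + 1) * N ^ p) := Nat.mul_le_mul_left _ (succ_pow_mul_sub_le N p)
      _ = a * N ^ p * (N + 1) := by ring
      _ ≤ N.choose c * (N + 1) := Nat.mul_le_mul_right _ ih
      _ = (N + 1).choose c * (N + 1 - c) := Nat.choose_mul_succ_eq N c

theorem four_pow_le_mul_choose {k : ℕ} (hk : 1 ≤ k) : 4 ^ k ≤ 4 * k * (2 * k).choose (k - 1) := by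
  obtain ⟨b, rfl⟩ := Nat.exists_eq_add_of_le' hk
  have hcentral := Nat.four_pow_le_two_mul_self_mul_centralBinom (b + 1) b.succ_pos
  have hratio : 1 * (2 * (b + 1)).choose (b + 1) ≤ 2 * (2 * (b + 1)).choose b := by
    have := Nat.choose_succ_right_eq (2 * (b + 1)) b
    rw [show 2 * (b + 1) - b = b + 2 by omega] at this
    nlinarith [Nat.zero_le (b * (2 * (b + 1)).choose b)]
  rw [Nat.centralBinom_eq_two_mul_choose] at hcentral
  calc 4 ^ (b + 1) ≤ 2 * (b + 1) * (2 * (b + 1)).choose (b + 1) := hcentral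
    _ ≤ 2 * (b + 1) * (2 * (2 * (b + 1)).choose b) := Nat.mul_le_mul_left _ (by linarith)
    _ = 4 * (b + 1) * (2 * (b + 1)).choose b := by ring

end BinomialBounds

section Numerics

variable {k m r t : ℕ}

theorem one_le_log {x : ℝ} (hx : 3 ≤ x) : 1 ≤ Real.log x := by
  rw [Real.le_log_iff_exp_le (by linarith)]
  linarith [Real.exp_one_lt_d9]

theorem log_le_div {x : ℝ} (hx : 16384 ≤ x) : Real.log x ≤ x / 64 := by
  have hsqrt : 128 ≤ √x := Real.le_sqrt_of_sq_le (by linarith)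
  have hlog := Real.log_le_sub_one_of_pos (show 0 < √x by linarith)
  rw [Real.log_sqrt (by linarith)] at hlog
  nlinarith [Real.mul_self_sqrt (show 0 ≤ x by linarith)]

theorem pow_le_pow_of_mul_log_le {x y : ℝ} {p q : ℕ} (hx : 0 < x) (hy : 0 < y)
    (h : p * Real.log x ≤ q * Real.log y) : x ^ p ≤ y ^ q := by
  rwa [← Real.log_le_log_iff (by positivity) (by positivity), Real.log_pow, Real.log_pow]

theorem pow_five_mul_two_pow_le (hk : 1 ≤ k) (hm : 15 * Real.log k ≤ m) :
    k ^ 5 * 2 ^ m ≤ 3 ^ m := by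
  have hlog : (1 : ℝ) / 3 ≤ Real.log (3 / 2) :=
    le_trans (by norm_num) (Real.one_sub_inv_le_log_of_pos (show (0 : ℝ) < 3 / 2 by norm_num))
  have hpow : (k : ℝ) ^ 5 ≤ (3 / 2) ^ m := by
    refine pow_le_pow_of_mul_log_le (by positivity) (by norm_num) ?_
    push_cast
    nlinarith [Nat.cast_nonneg (α := ℝ) m]
  rw [div_pow, le_div_iff₀ (by positivity)] at hpow
  exact_mod_cast hpow

theorem mul_cube_mul_four_pow_le_choose (hk : 16384 ≤ k) (hm : 15 * Real.log k ≤ m) :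
    32 * (2 * k + m) ^ 3 * 4 ^ k ≤ (2 * k + m).choose (k - 1) := by
  set m₀ := ⌈15 * Real.log k⌉₊
  have hm₀_k : m₀ + 3 ≤ k := by
    have hk : (16384 : ℝ) ≤ k := by exact_mod_cast hk
    have h := Nat.ceil_lt_add_one
      (show 0 ≤ 15 * Real.log k by linarith [one_le_log (x := k) (by linarith)])
    have : (m₀ : ℝ) + 3 ≤ k := by linarith [log_le_div hk]
    exact_mod_cast this
  have hgrow : 3 ^ m₀ * (2 * k).choose (k - 1) ≤ 2 ^ m₀ * (2 * k + m₀).choose (k - 1) :=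
    pow_mul_choose_le_pow_mul_choose_add (by norm_num) (by omega)
  have hbase : 32 * 4 ^ k * (2 * k + m₀) ^ 3 ≤ (2 * k + m₀).choose (k - 1) := by
    refine le_of_mul_le_mul_left (a := 2 ^ m₀) ?_ (by positivity)
    calc 2 ^ m₀ * (32 * 4 ^ k * (2 * k + m₀) ^ 3)
        ≤ 2 ^ m₀ * (32 * (4 * k * (2 * k).choose (k - 1)) * (3 * k) ^ 3) := by
          gcongr
          · exact four_pow_le_mul_choose (by omega)
          · omega
      _ = 3456 * (k ^ 4 * 2 ^ m₀ * (2 * k).choose (k - 1)) := by ring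
      _ ≤ k * (k ^ 4 * 2 ^ m₀ * (2 * k).choose (k - 1)) := Nat.mul_le_mul_right _ (by omega)
      _ = k ^ 5 * 2 ^ m₀ * (2 * k).choose (k - 1) := by ring
      _ ≤ 3 ^ m₀ * (2 * k).choose (k - 1) :=
          Nat.mul_le_mul_right _ (pow_five_mul_two_pow_le (by omega) (Nat.le_ceil _))
      _ ≤ 2 ^ m₀ * (2 * k + m₀).choose (k - 1) := hgrow
  rw [mul_right_comm]
  exact mul_pow_le_choose_of_le (by omega) (by omega)
    (Nat.add_le_add_left (Nat.ceil_le.2 hm) _) hbase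

theorem hundred_le_of_mul_log_le (hk : 3 ≤ k) (hr : 100 * Real.log k ≤ r) : 100 ≤ r := by
  have : (100 : ℝ) ≤ r := by linarith [one_le_log (x := k) (by exact_mod_cast hk)]
  exact_mod_cast this

theorem mul_two_mul_add_le_two_pow (hk : 16384 ≤ k) (hr : 100 * Real.log k ≤ r)
    (ht : r ≤ 4 * t + 8) : 8 * (2 * k + r) ≤ 2 ^ t := by
  have hlog := one_le_log (x := k) (by norm_cast; omega)
  have htr : (r : ℝ) ≤ 4 * t + 8 := by exact_mod_cast ht
  have hk_sq : k ^ 2 ≤ 2 ^ t := by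
    have hlog_two : (1 : ℝ) / 2 ≤ Real.log 2 := by linarith [Real.log_two_gt_d9]
    have hpow : (k : ℝ) ^ 2 ≤ 2 ^ t := by
      refine pow_le_pow_of_mul_log_le (by norm_cast; omega) two_pos ?_
      push_cast
      nlinarith [Nat.cast_nonneg (α := ℝ) t]
    exact_mod_cast hpow
  have ht_linear : 64 * t + 128 ≤ 2 ^ t := by
    have ht_ge : 10 ≤ t := by
      have : (10 : ℝ) ≤ t := by linarith
      exact_mod_cast this
    obtain ⟨u, rfl⟩ := Nat.exists_eq_add_of_le' (show 8 ≤ t by omega)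
    have := Nat.lt_two_pow_self (n := u)
    rw [pow_add]
    omega
  nlinarith

theorem two_pow_mul_choose_le (hk : 1 ≤ k) (hr : m + t + 2 = r) :
    2 ^ t * (2 * k + m).choose (k + r - 1) ≤ (2 * k + r - 2).choose (k - 1) := by
  have hgrow := pow_mul_choose_le_pow_mul_choose_add (a := 2) (b := 1) (N := 2 * k + m)
    (c := k + r - 1) (m := t) one_le_two (by omega)
  rwa [one_pow, one_mul, show 2 * k + m + t = 2 * k + r - 2 by omega,
    Nat.choose_symm_of_eq_add (show 2 * k + r - 2 = k + r - 1 + (k - 1) by omega)] at hgrow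

theorem four_mul_cube_mul_four_pow_le_choose (hk : 16384 ≤ k) (hr : 100 * Real.log k ≤ r) :
    4 * (2 * k + r) ^ 3 * 4 ^ k ≤ (2 * k + 3 * r / 4).choose (k - 1) := by
  have hm : 15 * Real.log k ≤ (3 * r / 4 : ℕ) := by
    have : (3 * r : ℝ) ≤ 4 * (3 * r / 4 : ℕ) + 3 := by
      exact_mod_cast (show 3 * r ≤ 4 * (3 * r / 4) + 3 by omega)
    linarith [one_le_log (x := k) (by norm_cast; omega)]
  calc 4 * (2 * k + r) ^ 3 * 4 ^ k ≤ 4 * (2 * (2 * k + 3 * r / 4)) ^ 3 * 4 ^ k := by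
        gcongr
        omega
    _ = 32 * (2 * k + 3 * r / 4) ^ 3 * 4 ^ k := by ring
    _ ≤ (2 * k + 3 * r / 4).choose (k - 1) := mul_cube_mul_four_pow_le_choose hk hm

theorem add_mul_choose_add_mul_four_pow_le_choose (hk : 16384 ≤ k)
    (hr : 100 * Real.log k ≤ r) {n : ℕ} (hn : n = 2 * k + r) :
    n + 2 * n * (2 * k + 3 * r / 4).choose (k + r - 1) + 2 * n * 4 ^ k ≤
      (n - 2).choose (k - 1) := by
  have hr_ge := hundred_le_of_mul_log_le (by omega) hr
  obtain ⟨t, ht⟩ : ∃ t, 3 * r / 4 + t + 2 = r := ⟨r - 2 - 3 * r / 4, by omega⟩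
  have hclosure : 8 * n * (2 * k + 3 * r / 4).choose (k + r - 1) ≤ (n - 2).choose (k - 1) := by
    rw [hn]
    exact (Nat.mul_le_mul_right _ (mul_two_mul_add_le_two_pow hk hr (by omega))).trans
      (two_pow_mul_choose_le (by omega) ht)
  have hlinear : 4 * (n * 4 ^ k) ≤ (n - 2).choose (k - 1) := calc
    4 * (n * 4 ^ k) ≤ 4 * (n ^ 3 * 4 ^ k) := by
      gcongr
      exact Nat.le_self_pow three_ne_zero n
    _ ≤ (2 * k + 3 * r / 4).choose (k - 1) := by
      rw [← mul_assoc, hn]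
      exact four_mul_cube_mul_four_pow_le_choose hk hr
    _ ≤ (n - 2).choose (k - 1) := Nat.choose_le_choose _ (by omega)
  have hn_le : n ≤ n * 4 ^ k := Nat.le_mul_of_pos_right n (by positivity)
  linarith

theorem le_two_rpow_sub {a b c : ℕ} {x : ℝ} (h : a * 2 ^ b ≤ 2 ^ c) (hx : x ≤ b) :
    (a : ℝ) ≤ 2 ^ (c - x) := by
  have h : (a : ℝ) * 2 ^ b ≤ 2 ^ c := by exact_mod_cast h
  calc (a : ℝ) ≤ 2 ^ ((c : ℝ) - b) := by
        rwa [Real.rpow_sub two_pos, Real.rpow_natCast, Real.rpow_natCast,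
          le_div_iff₀ (by positivity)]
    _ ≤ 2 ^ (c - x) := Real.rpow_le_rpow_of_exponent_le one_le_two (by linarith)

theorem mul_choose_div_two_le (n k : ℕ) :
    (n : ℝ) * ((2 * k).choose k : ℝ) / 2 ≤ ((n * 4 ^ k : ℕ) : ℝ) := by
  have hchoose : (2 * k).choose k ≤ 4 ^ k := (Nat.choose_le_two_pow _ _).trans_eq (pow_mul 2 2 k)
  have h : (n : ℝ) * (2 * k).choose k ≤ ((n * 4 ^ k : ℕ) : ℝ) := by
    exact_mod_cast Nat.mul_le_mul_left n hchoose
  linarith [show (0 : ℝ) ≤ n * (2 * k).choose k by positivity]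

end Numerics

theorem count_families_with_large_closure_general : ∃ K : ℕ, ∀ k : ℕ, K ≤ k → ∀ r n : ℕ,
    (100 * Real.log k ≤ (r : ℝ)) → n = 2 * k + r →
    (Nat.card {F : Finset (Finset ℕ) //
        (∀ S ∈ F, S ⊆ Finset.Icc 1 n ∧ S.card = k) ∧
        (∀ S ∈ F, ∀ T ∈ F, (S ∩ T).Nonempty) ∧
        (2 * k + 3 * r / 4).choose (k + r - 1) <
          (closureH ((Finset.Icc 1 n).erase (mostFreq n F)) k r
            ((F.filter fun S => mostFreq n F ∉ S).image
              fun S => (Finset.Icc 1 n).erase (mostFreq n F) \ S)).card} : ℝ) ≤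
      (2 : ℝ) ^ (((n - 1).choose (k - 1) : ℝ) - (n : ℝ) * ((2 * k).choose k : ℝ) / 2) := by
  classical
  refine ⟨16384, fun k hk r n hr hn => ?_⟩
  have hr_ge := hundred_le_of_mul_log_le (by omega) hr
  have hD := four_mul_cube_mul_four_pow_le_choose hk hr
  have hs := add_mul_choose_add_mul_four_pow_le_choose hk hr hn
  rw [← hn] at hD
  have hcount := card_intersecting_largeClosure_mul_le hn (by omega) (by omega) hD hs
  rw [← Nat.subtype_card (p := fun F : Finset (Finset ℕ) =>
    (∀ S ∈ F, S ⊆ Finset.Icc 1 n ∧ S.card = k) ∧ (∀ S ∈ F, ∀ T ∈ F, (S ∩ T).Nonempty) ∧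
      LargeClosure n k r ((2 * k + 3 * r / 4).choose (k + r - 1)) F) _ fun F => by
    simp only [mem_filter, mem_powerset, subset_iff (s₁ := F), mem_powersetCard, Set.Intersecting,
      mem_coe, not_disjoint_iff_nonempty_inter, LargeClosure]] at hcount
  exact le_two_rpow_sub hcount (mul_choose_div_two_le n k)

/-- There exists K such that for all k ≥ K, 100 ln k ≤ r ≤ 2+2√(k ln k)
and n = 2k+r, the number of intersecting families F of k-subsets of [n] with
|[φ(F) ∩ L_{k+r-1}]| > C(2k+⌊3r/4⌋, k+r-1) is at most
2^(C(n-1,k-1) - (1/2)·n·C(2k,k)). -/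
theorem count_families_with_large_closure : ∃ K : ℕ, ∀ k : ℕ, K ≤ k → ∀ r n : ℕ,
    (100 * Real.log k ≤ (r : ℝ)) → ((r : ℝ) ≤ 2 + 2 * Real.sqrt (k * Real.log k)) →
    n = 2 * k + r →
    (Nat.card {F : Finset (Finset ℕ) //
        (∀ S ∈ F, S ⊆ Finset.Icc 1 n ∧ S.card = k) ∧
        (∀ S ∈ F, ∀ T ∈ F, (S ∩ T).Nonempty) ∧
        (2 * k + 3 * r / 4).choose (k + r - 1) <
          (closureH ((Finset.Icc 1 n).erase (mostFreq n F)) k r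
            ((F.filter fun S => mostFreq n F ∉ S).image
              fun S => (Finset.Icc 1 n).erase (mostFreq n F) \ S)).card} : ℝ) ≤
      (2 : ℝ) ^ (((n - 1).choose (k - 1) : ℝ) - (n : ℝ) * ((2 * k).choose k : ℝ) / 2) := by
  obtain ⟨K, hK⟩ := count_families_with_large_closure_general
  exact ⟨K, fun k hk r n hr _ hn => hK k hk r n hr hn⟩
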